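/- arXiv:2502.05636 — 2 statements merged into one kernel-verified Lean document; each statement's English description precedes it below -/
import Mathlib

section
/- Let M be a nonempty closed convex subset of a Banach space E, and let A, B : M → E be maps such that (i) A x + B y ∈ M for all x, y ∈ M; (ii) A is continuous and the image A(M) is contained in a compact subset of E; (iii) B satisfies ‖B x − B y‖ ≤ κ ‖x − y‖ for all x, y ∈ M with a constant κ < 1. Then there exists y ∈ M such that A y + B y = y. -/
/-!
The theorem reduces to Brouwer's by way of Schauder's.

Brouwer, after Milnor and Rogers: let `f` be a `C¹` self-map of the closed unit ball fixing the
sphere pointwise. For large `s` the map `x ↦ s • x + f x` carries the unit ball bijectively onto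
the ball of radius `s + 1`, so `∫ det (s + f')` is `(s + 1) ^ n` times the volume of the unit ball.
Both sides are polynomials in `s`, hence they agree at `s = 0`, and `det f'` cannot vanish
identically. For a retraction onto the sphere it does, because `f'` maps into the orthogonal
complement of `f x`. A `C¹` map without fixed points would yield such a retraction, by following
the ray from `f x` through `x`.

Schauder: if the `ε`-balls around `c i` cover the image of `T`, then `T` induces a self-map of the
Euclidean unit ball, sending `l` to the normalised vector of bump functions of these balls at
`T (∑ l i ^ 2 • c i + (1 - ‖l‖ ^ 2) • m)`. Its fixed points lie on the sphere, so they give points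
moved by at most `ε`.

Krasnoselskii: the contraction `y ↦ w + B y` has a fixed point `S w` depending continuously on `w`,
and a fixed point of `S ∘ A` is the point sought.
-/

open Filter MeasureTheory Metric Polynomial Set Topology
open scoped NNReal InnerProductSpace

theorem integral_eval_eq_eval_of_infinite {α : Type*} [MeasurableSpace α] {μ : Measure α}
    {q : α → ℝ[X]} {p : ℝ[X]} {n : ℕ} {S : Set ℝ} (hS : S.Infinite)
    (hq : ∀ x, (q x).natDegree ≤ n) (hint : ∀ s ∈ S, Integrable (fun x ↦ (q x).eval s) μ)
    (h : ∀ s ∈ S, ∫ x, (q x).eval s ∂μ = p.eval s) (t : ℝ) :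
    ∫ x, (q x).eval t ∂μ = p.eval t := by
  obtain ⟨N, hNS, hN⟩ := hS.exists_subset_card_eq (max n p.natDegree + 1)
  have interp (r : ℝ[X]) (hr : r.natDegree ≤ max n p.natDegree) :
      r.eval t = ∑ s ∈ N, r.eval s * (Lagrange.basis N id s).eval t := by
    have hdeg : r.degree < N.card := by
      rw [hN]
      exact degree_le_natDegree.trans_lt (by exact_mod_cast Nat.lt_succ_of_le hr)
    conv_lhs => rw [Lagrange.eq_interpolate (injOn_id _) hdeg]
    simp [Lagrange.interpolate_apply, eval_finsetSum]
  calc ∫ x, (q x).eval t ∂μ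
      = ∫ x, ∑ s ∈ N, (q x).eval s * (Lagrange.basis N id s).eval t ∂μ := by
        simp_rw [fun x ↦ interp (q x) ((hq x).trans (le_max_left _ _))]
    _ = ∑ s ∈ N, p.eval s * (Lagrange.basis N id s).eval t := by
        rw [integral_finsetSum N fun s hs ↦ (hint s (hNS hs)).mul_const _]
        exact Finset.sum_congr rfl fun s hs ↦ by rw [integral_mul_const, h s (hNS hs)]
    _ = p.eval t := (interp p (le_max_right _ _)).symm

section NormedSpace

variable {E : Type*} [NormedAddCommGroup E] [NormedSpace ℝ E]

theorem injOn_smul_add {f : E → E} {U : Set E} {K : ℝ≥0} {s : ℝ}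
    (hf : LipschitzOnWith K f U) (hs : K < s) : InjOn (fun x ↦ s • x + f x) U := by
  intro x hx y hy hxy
  by_contra hne
  have hsub : s • (x - y) = -(f x - f y) := by
    rw [smul_sub, neg_sub, sub_eq_sub_iff_add_eq_add, add_comm (f y)]
    exact hxy
  have hnorm := congrArg norm hsub
  rw [norm_smul, norm_neg, Real.norm_of_nonneg (K.coe_nonneg.trans hs.le)] at hnorm
  have hle := hf.norm_sub_le hx hy
  have hlt := mul_lt_mul_of_pos_right hs (norm_sub_pos_iff.2 hne)
  linarith

theorem isOpen_image_smul_add [CompleteSpace E] {f : E → E} {U : Set E} {K : ℝ≥0} {s : ℝ}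
    (hU : IsOpen U) (hf : LipschitzOnWith K f U) (hs : K < s) :
    IsOpen ((fun x ↦ s • x + f x) '' U) := by
  have hs0 : 0 < s := K.coe_nonneg.trans_lt hs
  have approx : ApproximatesLinearOn (fun x ↦ s • x + f x) (s • ContinuousLinearMap.id ℝ E) U K :=
    ApproximatesLinearOn.approximatesLinearOn_iff_lipschitzOnWith.2
      (by convert! hf using 1; ext x; simp)
  let inv : (s • ContinuousLinearMap.id ℝ E).NonlinearRightInverse :=
    { toFun y := s⁻¹ • y
      nnnorm := ‖s⁻¹‖₊
      bound' y := (norm_smul _ _).le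
      right_inv' y := by simp [hs0.ne'] }
  refine approx.open_image inv hU (.inr ?_)
  simpa [inv, ← NNReal.coe_lt_coe, abs_of_pos hs0] using hs

variable [FiniteDimensional ℝ E]

theorem det_smul_id_add_ne_zero {A : E →L[ℝ] E} {s : ℝ} (hA : ‖A‖ < s) :
    (s • ContinuousLinearMap.id ℝ E + A).det ≠ 0 := by
  intro hdet
  obtain ⟨v, hv, hv0⟩ := (LinearMap.ker _).ne_bot_iff.1
    (LinearMap.bot_lt_ker_of_det_eq_zero hdet).ne'
  have hs : s • v = -A v := eq_neg_of_add_eq_zero_left (by simpa using hv)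
  have := congrArg norm hs
  rw [norm_smul, norm_neg, Real.norm_of_nonneg ((norm_nonneg A).trans hA.le)] at this
  have := A.le_opNorm v
  have := mul_lt_mul_of_pos_right hA (norm_pos_iff.2 hv0)
  linarith

theorem det_smul_id_add_pos {A : E →L[ℝ] E} {s : ℝ} (hA : ‖A‖ < s) :
    0 < (s • ContinuousLinearMap.id ℝ E + A).det := by
  have hs : 0 < s := (norm_nonneg A).trans_lt hA
  let d (t : ℝ) : ℝ := (s • ContinuousLinearMap.id ℝ E + t • A).det
  have hd : Continuous d := ContinuousLinearMap.continuous_det.comp (by fun_prop)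
  have hd0 : 0 < d 0 := by simp [d, ContinuousLinearMap.det, hs]
  suffices 0 < d 1 by simpa [d] using this
  by_contra! hd1
  obtain ⟨t, ht, hdt⟩ := intermediate_value_Icc' zero_le_one hd.continuousOn ⟨hd1, hd0.le⟩
  refine det_smul_id_add_ne_zero (A := t • A) (lt_of_le_of_lt ?_ hA) hdt
  rw [norm_smul, Real.norm_of_nonneg ht.1]
  exact mul_le_of_le_one_left (norm_nonneg A) ht.2

theorem eval_charpoly_neg (A : E →L[ℝ] E) (s : ℝ) :
    (-A.toLinearMap).charpoly.eval s = (s • ContinuousLinearMap.id ℝ E + A).det := by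
  rw [LinearMap.eval_charpoly, sub_neg_eq_add]
  rfl

theorem image_ball_smul_add {f : E → E} {K : ℝ≥0} {s : ℝ}
    (hf : LipschitzOnWith K f (closedBall 0 1))
    (hmaps : MapsTo f (closedBall 0 1) (closedBall 0 1)) (hid : ∀ x ∈ sphere 0 1, f x = x)
    (hs : K < s) : (fun x ↦ s • x + f x) '' ball 0 1 = ball 0 (s + 1) := by
  set h : E → E := fun x ↦ s • x + f x with h_def
  have hs0 : 0 < s := K.coe_nonneg.trans_lt hs
  have hopen : IsOpen (h '' ball 0 1) :=
    isOpen_image_smul_add isOpen_ball (hf.mono ball_subset_closedBall) hs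
  have hcont : ContinuousOn h (closedBall 0 1) := by
    have := hf.continuousOn
    fun_prop
  have hnorm {x : E} (hx : x ∈ closedBall 0 1) : ‖h x‖ ≤ s * ‖x‖ + 1 :=
    (norm_add_le _ _).trans (add_le_add (by rw [norm_smul, Real.norm_of_nonneg hs0.le])
      (mem_closedBall_zero_iff.1 (hmaps hx)))
  -- For the inclusion `⊇`, the image is open, and it is closed in `ball 0 (s + 1)` because the unit
  -- sphere goes to the sphere of radius `s + 1`.
  apply Subset.antisymm
  · rintro _ ⟨x, hx, rfl⟩
    have hx' := mem_ball_zero_iff.1 hx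
    rw [mem_ball_zero_iff]
    nlinarith [hnorm (ball_subset_closedBall hx)]
  · refine (convex_ball 0 (s + 1)).isPreconnected.subset_of_closure_inter_subset hopen
      ⟨h 0, ?_, mem_image_of_mem h (mem_ball_self one_pos)⟩ ?_
    · have := hnorm (mem_closedBall_self zero_le_one)
      rw [norm_zero] at this
      rw [mem_ball_zero_iff]
      linarith
    · rintro y ⟨hy, hys⟩
      have hclosed : IsClosed (h '' closedBall 0 1) :=
        ((isCompact_closedBall 0 1).image_of_continuousOn hcont).isClosed
      obtain ⟨x, hx, rfl⟩ := closure_minimal (image_mono ball_subset_closedBall) hclosed hy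
      refine mem_image_of_mem h ((mem_closedBall.1 hx).lt_of_ne fun hx1 ↦ ?_)
      have hhx : h x = (s + 1) • x := by simp only [h_def, hid x hx1, add_smul, one_smul]
      rw [hhx, mem_ball_zero_iff, norm_smul, mem_sphere_zero_iff_norm.1 hx1, mul_one] at hys
      exact (le_abs_self _).not_gt hys

variable [MeasurableSpace E] [BorelSpace E]

theorem setIntegral_ball_det_fderiv (μ : Measure E) [μ.IsAddHaarMeasure] {f : E → E} {K : ℝ≥0}
    (hf : LipschitzOnWith K f (closedBall 0 1)) (hdiff : DifferentiableOn ℝ f (ball 0 1))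
    (hmaps : MapsTo f (closedBall 0 1) (closedBall 0 1)) (hid : ∀ x ∈ sphere 0 1, f x = x) :
    ∫ x in ball 0 1, (fderiv ℝ f x).det ∂μ = μ.real (ball 0 1) := by
  let q (x : E) : ℝ[X] := (-(fderiv ℝ f x).toLinearMap).charpoly
  let p : ℝ[X] := C (μ.real (ball 0 1)) * (X + 1) ^ Module.finrank ℝ E
  have hderiv {x : E} (hx : x ∈ ball 0 1) (s : ℝ) : HasFDerivWithinAt (fun x ↦ s • x + f x)
      (s • ContinuousLinearMap.id ℝ E + fderiv ℝ f x) (ball 0 1) x :=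
    ((hasFDerivWithinAt_id x _).const_smul s).add
      ((hdiff x hx).differentiableAt (isOpen_ball.mem_nhds hx)).hasFDerivAt.hasFDerivWithinAt
  have hpos {s : ℝ} (hs : K < s) {x : E} (hx : x ∈ ball 0 1) :
      |(s • ContinuousLinearMap.id ℝ E + fderiv ℝ f x).det| = (q x).eval s := by
    have hfx : ‖fderiv ℝ f x‖ ≤ K :=
      norm_fderiv_le_of_lipschitzOn ℝ (closedBall_mem_nhds_of_mem hx) hf
    rw [eval_charpoly_neg, abs_of_pos (det_smul_id_add_pos (hfx.trans_lt hs))]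
  have hinj {s : ℝ} (hs : K < s) := injOn_smul_add (hf.mono ball_subset_closedBall) hs
  have hint : ∀ s ∈ Ioi (K : ℝ), IntegrableOn (fun x ↦ (q x).eval s) (ball 0 1) μ := by
    intro s hs
    have := (integrableOn_image_iff_integrableOn_abs_det_fderiv_smul μ measurableSet_ball
      (fun x hx ↦ hderiv hx s) (hinj hs) fun _ ↦ (1 : ℝ)).1
      (by rw [image_ball_smul_add hf hmaps hid hs]; exact integrableOn_const measure_ball_lt_top.ne)
    exact this.congr_fun (fun x hx ↦ by simp [hpos hs hx]) measurableSet_ball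
  have hvol : ∀ s ∈ Ioi (K : ℝ), ∫ x in ball 0 1, (q x).eval s ∂μ = p.eval s := by
    intro s hs
    have hs1 : 0 < s + 1 := by linarith [K.coe_nonneg.trans_lt hs]
    calc ∫ x in ball 0 1, (q x).eval s ∂μ
        = ∫ x in ball 0 1, |(s • ContinuousLinearMap.id ℝ E + fderiv ℝ f x).det| • (1 : ℝ) ∂μ :=
          setIntegral_congr_fun measurableSet_ball fun x hx ↦ by simp [hpos hs hx]
      _ = μ.real (ball 0 (s + 1)) := by
          rw [← integral_image_eq_integral_abs_det_fderiv_smul μ measurableSet_ball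
            (fun x hx ↦ hderiv hx s) (hinj hs) fun _ ↦ (1 : ℝ), image_ball_smul_add hf hmaps hid hs]
          simp
      _ = p.eval s := by
          simp [measureReal_def, μ.addHaar_ball_of_pos 0 hs1, hs1.le, p, mul_comm]
  have hq (x : E) : (q x).natDegree ≤ Module.finrank ℝ E := (LinearMap.charpoly_natDegree _).le
  simpa [q, p, eval_charpoly_neg] using
    integral_eval_eq_eval_of_infinite (Ioi_infinite _) hq hint hvol 0

end NormedSpace

section InnerProductSpace

variable {E : Type*} [NormedAddCommGroup E] [InnerProductSpace ℝ E]

theorem det_eq_zero_of_norm_eq_one [FiniteDimensional ℝ E] {f : E → E} {f' : E →L[ℝ] E} {x : E}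
    (hf : HasFDerivAt f f' x) (hnorm : ∀ᶠ y in 𝓝 x, ‖f y‖ = 1) : f'.det = 0 := by
  have hsq : (fun y ↦ ‖f y‖ ^ 2) =ᶠ[𝓝 x] fun _ ↦ 1 := hnorm.mono fun y hy ↦ by simp [hy]
  have horth : 2 • (innerSL ℝ (f x)).comp f' = 0 :=
    hf.norm_sq.unique ((hasFDerivAt_const 1 x).congr_of_eventuallyEq hsq)
  by_contra hdet
  obtain ⟨v, hv⟩ := (f'.toContinuousLinearEquivOfDetNeZero hdet).surjective (f x)
  rw [f'.toContinuousLinearEquivOfDetNeZero_apply] at hv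
  have := congr($horth v)
  simp [hv, hnorm.self_of_nhds] at this

theorem not_mapsTo_sphere_of_eq_id_sphere [FiniteDimensional ℝ E] {f : E → E} {K : ℝ≥0}
    (hf : LipschitzOnWith K f (closedBall 0 1)) (hdiff : DifferentiableOn ℝ f (ball 0 1))
    (hid : ∀ x ∈ sphere 0 1, f x = x) : ¬ MapsTo f (closedBall 0 1) (sphere 0 1) := by
  intro hmaps
  borelize E
  have hdet : ∀ x ∈ ball (0 : E) 1, (fderiv ℝ f x).det = 0 := by
    intro x hx
    refine det_eq_zero_of_norm_eq_one
      ((hdiff x hx).differentiableAt (isOpen_ball.mem_nhds hx)).hasFDerivAt ?_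
    filter_upwards [closedBall_mem_nhds_of_mem hx] with y hy
    simpa using hmaps hy
  have hvol := setIntegral_ball_det_fderiv .addHaar hf hdiff
    (hmaps.mono_right sphere_subset_closedBall) hid
  rw [setIntegral_congr_fun measurableSet_ball hdet, integral_zero] at hvol
  exact (ENNReal.toReal_pos (measure_ball_pos _ 0 one_pos).ne' measure_ball_lt_top.ne).ne hvol


/-- The point where the ray from `y` through `x` leaves the unit ball, for `x ≠ y` in that ball: it
is `x + t • (x - y)`, with `t` the nonnegative root of the quadratic equation
`‖x + t • (x - y)‖ ^ 2 = 1`. It turns a map `f` without fixed points into the retraction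
`x ↦ rayExit (f x) x` onto the sphere. -/
noncomputable def rayExit (y x : E) : E :=
  x + ((√(⟪x, x - y⟫_ℝ ^ 2 + ‖x - y‖ ^ 2 * (1 - ‖x‖ ^ 2)) - ⟪x, x - y⟫_ℝ) / ‖x - y‖ ^ 2) • (x - y)

theorem norm_rayExit {x y : E} (hx : ‖x‖ ≤ 1) (hxy : x ≠ y) : ‖rayExit y x‖ = 1 := by
  have hu : ‖x - y‖ ≠ 0 := norm_ne_zero_iff.2 (sub_ne_zero.2 hxy)
  have hx2 : 0 ≤ 1 - ‖x‖ ^ 2 := sub_nonneg.2 (pow_le_one₀ (norm_nonneg x) hx)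
  have hsqrt := Real.sq_sqrt
    (show 0 ≤ ⟪x, x - y⟫_ℝ ^ 2 + ‖x - y‖ ^ 2 * (1 - ‖x‖ ^ 2) by positivity)
  rw [← sq_eq_sq₀ (norm_nonneg _) zero_le_one, rayExit, norm_add_sq_real, inner_smul_right,
    norm_smul, mul_pow, Real.norm_eq_abs, sq_abs]
  field_simp
  linear_combination hsqrt

theorem rayExit_of_norm_eq_one {x y : E} (hx : ‖x‖ = 1) (hy : ‖y‖ ≤ 1) : rayExit y x = x := by
  have hinner : 0 ≤ ⟪x, x - y⟫_ℝ := by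
    rw [inner_sub_right, real_inner_self_eq_norm_sq, hx]
    have := real_inner_le_norm x y
    rw [hx] at this
    linarith
  simp [rayExit, hx, Real.sqrt_sq hinner]

theorem rayExit_discrim_pos {x y : E} (hx : ‖x‖ ≤ 1) (hy : ‖y‖ ≤ 1) (hxy : x ≠ y) :
    0 < ⟪x, x - y⟫_ℝ ^ 2 + ‖x - y‖ ^ 2 * (1 - ‖x‖ ^ 2) := by
  obtain hx1 | hx1 := hx.lt_or_eq
  · have hx2 : 0 < 1 - ‖x‖ ^ 2 := sub_pos.2 (pow_lt_one₀ (norm_nonneg x) hx1 two_ne_zero)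
    have hu : 0 < ‖x - y‖ := norm_sub_pos_iff.2 hxy
    positivity
  · have hinner : ⟪x, y⟫_ℝ ≠ 1 := by
      intro h1
      have := norm_sub_sq_real x y
      rw [h1, hx1] at this
      nlinarith [norm_sub_pos_iff.2 hxy, norm_nonneg y]
    have hne : ⟪x, x - y⟫_ℝ ≠ 0 := by
      rw [inner_sub_right, real_inner_self_eq_norm_sq, hx1, one_pow]
      exact sub_ne_zero.2 hinner.symm
    simp only [hx1, one_pow, sub_self, mul_zero, add_zero]
    positivity

theorem contDiffOn_rayExit {f : E → E} {n : WithTop ℕ∞}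
    (hf : ContDiffOn ℝ n f (closedBall 0 1)) (hmaps : MapsTo f (closedBall 0 1) (closedBall 0 1))
    (hfix : ∀ x ∈ closedBall 0 1, x ≠ f x) :
    ContDiffOn ℝ n (fun x ↦ rayExit (f x) x) (closedBall 0 1) := by
  have hu : ContDiffOn ℝ n (fun x ↦ x - f x) (closedBall 0 1) := contDiffOn_id.sub hf
  have hinner : ContDiffOn ℝ n (fun x ↦ ⟪x, x - f x⟫_ℝ) (closedBall 0 1) :=
    contDiffOn_id.inner ℝ hu
  have hdiscrim : ContDiffOn ℝ n
      (fun x ↦ ⟪x, x - f x⟫_ℝ ^ 2 + ‖x - f x‖ ^ 2 * (1 - ‖x‖ ^ 2)) (closedBall 0 1) :=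
    (hinner.pow 2).add ((hu.norm_sq ℝ).mul (contDiffOn_const.sub (contDiffOn_id.norm_sq ℝ)))
  refine contDiffOn_id.add ((((hdiscrim.sqrt fun x hx ↦ ?_).sub hinner).div (hu.norm_sq ℝ)
    fun x hx ↦ ?_).smul hu)
  · exact (rayExit_discrim_pos (mem_closedBall_zero_iff.1 hx)
      (mem_closedBall_zero_iff.1 (hmaps hx)) (hfix x hx)).ne'
  · exact pow_ne_zero 2 (norm_ne_zero_iff.2 (sub_ne_zero.2 (hfix x hx)))

theorem exists_fixedPoint_closedBall_of_contDiffOn [FiniteDimensional ℝ E] {f : E → E}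
    (hf : ContDiffOn ℝ 1 f (closedBall 0 1))
    (hmaps : MapsTo f (closedBall 0 1) (closedBall 0 1)) : ∃ x ∈ closedBall 0 1, f x = x := by
  by_contra! hfix
  have hr := contDiffOn_rayExit hf hmaps fun x hx ↦ (hfix x hx).symm
  obtain ⟨K, hK⟩ := hr.exists_lipschitzOnWith one_ne_zero (convex_closedBall 0 1)
    (isCompact_closedBall 0 1)
  refine not_mapsTo_sphere_of_eq_id_sphere hK
    ((hr.differentiableOn one_ne_zero).mono ball_subset_closedBall) (fun x hx ↦ ?_) fun x hx ↦ ?_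
  · exact rayExit_of_norm_eq_one (mem_sphere_zero_iff_norm.1 hx)
      (mem_closedBall_zero_iff.1 (hmaps (sphere_subset_closedBall hx)))
  · exact mem_sphere_zero_iff_norm.2
      (norm_rayExit (mem_closedBall_zero_iff.1 hx) (hfix x hx).symm)

end InnerProductSpace

theorem exists_fixedPoint_of_forall_exists_dist_le {X : Type*} [MetricSpace X] {K M : Set X}
    {f : X → X} (hf : ContinuousOn f M) (hK : IsCompact K) (hKM : K ⊆ M) (hmaps : MapsTo f M K)
    (happrox : ∀ ε > 0, ∃ x ∈ M, dist x (f x) ≤ ε) : ∃ x ∈ M, f x = x := by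
  choose x hxM hx using fun n : ℕ ↦ happrox (1 / (n + 1)) Nat.one_div_pos_of_nat
  obtain ⟨a, haK, φ, hφ, hlim⟩ := hK.tendsto_subseq fun n ↦ hmaps (hxM n)
  have hdist : Tendsto (fun n ↦ dist (x (φ n)) (f (x (φ n)))) atTop (𝓝 0) :=
    squeeze_zero (fun _ ↦ dist_nonneg) (fun n ↦ hx (φ n))
      (tendsto_one_div_add_atTop_nhds_zero_nat.comp hφ.tendsto_atTop)
  have hxlim : Tendsto (x ∘ φ) atTop (𝓝 a) := hlim.congr_dist (by simpa [dist_comm] using hdist)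
  have hflim : Tendsto (f ∘ x ∘ φ) atTop (𝓝 (f a)) := (hf a (hKM haK)).tendsto.comp
    (tendsto_nhdsWithin_iff.2 ⟨hxlim, .of_forall fun n ↦ hxM (φ n)⟩)
  exact ⟨a, hKM haK, tendsto_nhds_unique hflim hlim⟩

theorem exists_fixedPoint_closedBall {E : Type*} [NormedAddCommGroup E] [InnerProductSpace ℝ E]
    [FiniteDimensional ℝ E] {f : E → E} (hf : ContinuousOn f (closedBall 0 1))
    (hmaps : MapsTo f (closedBall 0 1) (closedBall 0 1)) : ∃ x ∈ closedBall 0 1, f x = x := by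
  refine exists_fixedPoint_of_forall_exists_dist_le hf (isCompact_closedBall 0 1) subset_rfl hmaps
    fun ε hε ↦ ?_
  obtain ⟨F, hF⟩ := ContinuousMap.exists_restrict_eq isClosed_closedBall
    ⟨(closedBall 0 1).domRestrict f, hf.domRestrict⟩
  have hFf {x : E} (hx : x ∈ closedBall 0 1) : F x = f x := congr($hF ⟨x, hx⟩)
  obtain ⟨g, hg, hgF, -⟩ := F.continuous.exists_contDiff_approx 1
    (ε := fun _ ↦ ε / 2) continuous_const fun _ ↦ half_pos hε
  have hgf {x : E} (hx : x ∈ closedBall 0 1) : ‖g x - f x‖ ≤ ε / 2 := by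
    rw [← dist_eq_norm, ← hFf hx]
    exact (hgF x).le
  have hg_norm {x : E} (hx : x ∈ closedBall 0 1) : ‖g x‖ ≤ 1 + ε / 2 := by
    have := norm_le_norm_add_norm_sub' (g x) (f x)
    have := mem_closedBall_zero_iff.1 (hmaps hx)
    linarith [hgf hx]
  have hscale : 0 < 1 + ε / 2 := by positivity
  obtain ⟨x, hx, hfix⟩ := exists_fixedPoint_closedBall_of_contDiffOn
    (f := fun x ↦ (1 + ε / 2)⁻¹ • g x) (hg.const_smul _).contDiffOn fun x hx ↦ by
      rw [mem_closedBall_zero_iff, norm_smul, norm_inv, Real.norm_of_nonneg hscale.le]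
      exact inv_mul_le_one_of_le₀ (hg_norm hx) hscale.le
  have hgx : g x = x + (ε / 2) • x := by
    rw [inv_smul_eq_iff₀ hscale.ne'] at hfix
    rw [hfix, add_smul, one_smul]
  refine ⟨x, hx, ?_⟩
  calc dist x (f x) = ‖(g x - f x) - (ε / 2) • x‖ := by rw [dist_eq_norm, hgx]; congr 1; abel
    _ ≤ ε / 2 + ε / 2 * 1 := by
        refine (norm_sub_le _ _).trans (add_le_add (hgf hx) ?_)
        rw [norm_smul, Real.norm_of_nonneg (half_pos hε).le]
        gcongr
        exact mem_closedBall_zero_iff.1 hx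
    _ = ε := by ring

section BumpVector

variable {ι X : Type*} [PseudoMetricSpace X]

/-- The vector of bump functions `(ε - dist y (c i))⁺` of the balls of radius `ε` around the
points `c i`. It plays the part of a partition of unity subordinate to these balls. -/
noncomputable def bumpVector (c : ι → X) (ε : ℝ) (y : X) : EuclideanSpace ℝ ι :=
  WithLp.toLp 2 fun i ↦ max 0 (ε - dist y (c i))

theorem continuous_bumpVector (c : ι → X) (ε : ℝ) : Continuous (bumpVector c ε) := by
  unfold bumpVector
  fun_prop

theorem bumpVector_apply_ne_zero {c : ι → X} {ε : ℝ} {y : X} {i : ι} :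
    bumpVector c ε y i ≠ 0 ↔ dist y (c i) < ε := by
  simp [bumpVector]

end BumpVector

section Schauder

variable {ι E : Type*} [NormedAddCommGroup E] [NormedSpace ℝ E]

/-- The convex combination of the points `c i` and `m` with weights `l i ^ 2` and `1 - ‖l‖ ^ 2`,
parametrised by the Euclidean unit ball instead of a simplex so that Brouwer's theorem for balls
applies. The point `m` has weight `0` on the unit sphere. -/
noncomputable def ballCombo [Fintype ι] (c : ι → E) (m : E) (l : EuclideanSpace ℝ ι) : E :=
  ∑ i, l i ^ 2 • c i + (1 - ‖l‖ ^ 2) • m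

theorem continuous_ballCombo [Fintype ι] (c : ι → E) (m : E) : Continuous (ballCombo c m) := by
  unfold ballCombo
  fun_prop

theorem mapsTo_ballCombo [Fintype ι] {c : ι → E} {m : E} {M : Set E} (hM : Convex ℝ M)
    (hc : ∀ i, c i ∈ M) (hm : m ∈ M) : MapsTo (ballCombo c m) (closedBall 0 1) M := by
  intro l hl
  have hl1 : ‖l‖ ^ 2 ≤ 1 := pow_le_one₀ (norm_nonneg l) (mem_closedBall_zero_iff.1 hl)
  have := hM.sum_mem (t := Finset.univ) (w := fun o : Option ι ↦ o.elim (1 - ‖l‖ ^ 2) (l · ^ 2))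
    (z := fun o ↦ o.elim m c) (by rintro (_ | i) -; exacts [sub_nonneg.2 hl1, sq_nonneg (l i)])
    (by simp [Fintype.sum_option, EuclideanSpace.real_norm_sq_eq])
    (by rintro (_ | i) -; exacts [hm, hc i])
  simpa [Fintype.sum_option, ballCombo, add_comm] using this

theorem dist_ballCombo_le [Fintype ι] {c : ι → E} {l : EuclideanSpace ℝ ι} (hl : ‖l‖ = 1)
    (m : E) {y : E} {ε : ℝ} (hy : ∀ i, l i ≠ 0 → dist y (c i) ≤ ε) :
    dist (ballCombo c m l) y ≤ ε := by
  have hsum : ∑ i, l i ^ 2 = 1 := by rw [← EuclideanSpace.real_norm_sq_eq, hl, one_pow]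
  calc dist (ballCombo c m l) y = ‖∑ i, l i ^ 2 • (c i - y)‖ := by
        simp only [smul_sub, Finset.sum_sub_distrib, ← Finset.sum_smul, hsum, one_smul]
        simp [ballCombo, hl, dist_eq_norm]
    _ ≤ ∑ i, l i ^ 2 * ε := by
        refine norm_sum_le_of_le _ fun i _ ↦ ?_
        rw [norm_smul, Real.norm_of_nonneg (sq_nonneg _), ← dist_eq_norm, dist_comm]
        obtain hi | hi := eq_or_ne (l i) 0
        · simp [hi]
        · exact mul_le_mul_of_nonneg_left (hy i hi) (sq_nonneg _)
    _ = ε := by rw [← Finset.sum_mul, hsum, one_mul]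

theorem exists_dist_map_le_of_cover [Finite ι] {c : ι → E} {M : Set E} {T : E → E} {ε : ℝ}
    (hM : M.Nonempty) (hconv : Convex ℝ M) (hT : ContinuousOn T M) (hc : ∀ i, c i ∈ M)
    (hcover : ∀ x ∈ M, ∃ i, dist (T x) (c i) < ε) : ∃ x ∈ M, dist x (T x) ≤ ε := by
  cases nonempty_fintype ι
  obtain ⟨m, hm⟩ := hM
  have hb := mapsTo_ballCombo hconv hc hm
  let v (l : EuclideanSpace ℝ ι) := bumpVector c ε (T (ballCombo c m l))
  have hv : ContinuousOn v (closedBall 0 1) := (continuous_bumpVector c ε).comp_continuousOn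
    (hT.comp (continuous_ballCombo c m).continuousOn hb)
  have hv0 {l : EuclideanSpace ℝ ι} (hl : l ∈ closedBall 0 1) : v l ≠ 0 := by
    obtain ⟨i, hi⟩ := hcover _ (hb hl)
    exact fun h ↦ bumpVector_apply_ne_zero.2 hi congr($h i)
  have hnorm {l : EuclideanSpace ℝ ι} (hl : l ∈ closedBall 0 1) : ‖‖v l‖⁻¹ • v l‖ = 1 :=
    norm_smul_inv_norm (𝕜 := ℝ) (hv0 hl)
  obtain ⟨l, hl, hfix⟩ := exists_fixedPoint_closedBall (f := fun l ↦ ‖v l‖⁻¹ • v l)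
    ((hv.norm.inv₀ fun l hl ↦ norm_ne_zero_iff.2 (hv0 hl)).smul hv)
    fun l hl ↦ mem_closedBall_zero_iff.2 (hnorm hl).le
  refine ⟨ballCombo c m l, hb hl, dist_ballCombo_le (hfix ▸ hnorm hl) m fun i hi ↦ ?_⟩
  have hvi : v l i ≠ 0 := right_ne_zero_of_mul (a := ‖v l‖⁻¹) (by rwa [← hfix] at hi)
  exact (bumpVector_apply_ne_zero.1 hvi).le

theorem exists_fixedPoint_of_convex_of_isCompact {M C : Set E} {T : E → E}
    (hM : M.Nonempty) (hconv : Convex ℝ M) (hT : ContinuousOn T M) (hC : IsCompact C)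
    (hCM : C ⊆ M) (hmaps : MapsTo T M C) : ∃ x ∈ M, T x = x := by
  refine exists_fixedPoint_of_forall_exists_dist_le hT hC hCM hmaps fun ε hε ↦ ?_
  obtain ⟨t, htC, ht, hcover⟩ := hC.finite_cover_balls hε
  have := ht.to_subtype
  refine exists_dist_map_le_of_cover (c := ((↑) : t → E)) hM hconv hT (fun i ↦ hCM (htC i.2))
    fun x hx ↦ ?_
  obtain ⟨c, hc, hxc⟩ := mem_iUnion₂.1 (hcover (hmaps hx))
  exact ⟨⟨c, hc⟩, hxc⟩

end Schauder

section Krasnoselskii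

variable {E : Type*} [NormedAddCommGroup E] {B : E → E} {M : Set E} {K : ℝ≥0}

theorem exists_add_eq_self_of_lipschitzOnWith (hM : M.Nonempty) (hMc : IsComplete M)
    (hB : LipschitzOnWith K B M) (hK : K < 1) {w : E} (hw : MapsTo (w + B ·) M M) :
    ∃ z ∈ M, w + B z = z := by
  obtain ⟨x, hx⟩ := hM
  have hcontr : ContractingWith K (hw.restrict (w + B ·) M M) :=
    ⟨hK, LipschitzOnWith.mapsToRestrict hw (by simpa [LipschitzOnWith] using hB)⟩
  obtain ⟨z, hz, hfix, -⟩ := hcontr.exists_fixedPoint' hMc hw hx (edist_ne_top _ _)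
  exact ⟨z, hz, hfix⟩

theorem one_sub_mul_dist_le_of_add_eq_self (hB : LipschitzOnWith K B M) {w w' z z' : E}
    (hz : z ∈ M) (hz' : z' ∈ M) (hw : w + B z = z) (hw' : w' + B z' = z') :
    (1 - K) * dist z z' ≤ dist w w' := by
  have := dist_add_add_le w (B z) w' (B z')
  rw [hw, hw'] at this
  linarith [hB.dist_le_mul z hz z' hz']

theorem exists_continuousOn_add_eq_self (hM : M.Nonempty) (hMc : IsComplete M)
    (hB : LipschitzOnWith K B M) (hK : K < 1) :
    ∃ S : E → E, ContinuousOn S {w | MapsTo (w + B ·) M M} ∧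
      ∀ w, MapsTo (w + B ·) M M → S w ∈ M ∧ w + B (S w) = S w := by
  choose! S hSM hS using
    fun w (hw : MapsTo (w + B ·) M M) ↦ exists_add_eq_self_of_lipschitzOnWith hM hMc hB hK hw
  have hK' : (0 : ℝ) < 1 - K := sub_pos.2 hK
  refine ⟨S, LipschitzOnWith.continuousOn (K := (1 - K)⁻¹) ?_, fun w hw ↦ ⟨hSM w hw, hS w hw⟩⟩
  refine .of_dist_le_mul fun w hw w' hw' ↦ ?_
  rw [NNReal.coe_inv, NNReal.coe_sub hK.le, NNReal.coe_one, inv_mul_eq_div,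
    le_div_iff₀' hK']
  exact one_sub_mul_dist_le_of_add_eq_self hB (hSM w hw) (hSM w' hw') (hS w hw) (hS w' hw')

theorem isClosed_setOf_mapsTo_add (hM : IsClosed M) : IsClosed {w | MapsTo (w + B ·) M M} := by
  simp only [MapsTo, ofPred_forall]
  exact isClosed_biInter fun y _ ↦ hM.preimage (continuous_add_const (B y))

end Krasnoselskii

theorem krasnoselskii_fixed_point_general {E : Type*} [NormedAddCommGroup E] [NormedSpace ℝ E]
    {M : Set E} (hM : M.Nonempty) (hMcomplete : IsComplete M) (hMconv : Convex ℝ M)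
    {A B : E → E} {κ : ℝ} (hκ : κ < 1) (hAB : ∀ x ∈ M, ∀ y ∈ M, A x + B y ∈ M)
    (hAcont : ContinuousOn A M) (hAcomp : ∃ K : Set E, IsCompact K ∧ A '' M ⊆ K)
    (hBcontr : ∀ x ∈ M, ∀ y ∈ M, ‖B x - B y‖ ≤ κ * ‖x - y‖) : ∃ y ∈ M, A y + B y = y := by
  have hB : LipschitzOnWith κ.toNNReal B M := .of_dist_le_mul fun x hx y hy ↦ by
    simpa only [dist_eq_norm] using (hBcontr x hx y hy).trans
      (mul_le_mul_of_nonneg_right (Real.le_coe_toNNReal κ) (norm_nonneg _))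
  obtain ⟨K, hK, hAK⟩ := hAcomp
  obtain ⟨S, hScont, hS⟩ :=
    exists_continuousOn_add_eq_self hM hMcomplete hB (Real.toNNReal_lt_one.2 hκ)
  have hcompact : IsCompact (S '' (K ∩ {w | MapsTo (w + B ·) M M})) :=
    (hK.inter_right (isClosed_setOf_mapsTo_add hMcomplete.isClosed)).image_of_continuousOn
      (hScont.mono inter_subset_right)
  obtain ⟨y, hy, hfix : S (A y) = y⟩ :=
    exists_fixedPoint_of_convex_of_isCompact (T := S ∘ A) hM hMconv
      (hScont.comp hAcont hAB) hcompact (image_subset_iff.2 fun w hw ↦ (hS w hw.2).1)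
      fun x hx ↦ mem_image_of_mem S ⟨hAK (mem_image_of_mem A hx), hAB x hx⟩
  exact ⟨y, hy, by simpa only [hfix] using (hS (A y) (hAB y hy)).2⟩

/-- **Krasnoselskii fixed point theorem.** Let `M` be a nonempty closed convex subset of a
Banach space `E`, and `A B : M → E` maps such that `A x + B y ∈ M` for all `x y ∈ M`,
`A` is continuous on `M` with image contained in a compact set, and `B` is a contraction
on `M` with constant `κ < 1`. Then some `y ∈ M` satisfies `A y + B y = y`. -/
theorem krasnoselskii_fixed_point
    {E : Type*} [NormedAddCommGroup E] [NormedSpace ℝ E] [CompleteSpace E]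
    (M : Set E) (hM : M.Nonempty) (hMclosed : IsClosed M) (hMconv : Convex ℝ M)
    (A B : E → E) (κ : ℝ) (hκ : κ < 1)
    (hAB : ∀ x ∈ M, ∀ y ∈ M, A x + B y ∈ M)
    (hAcont : ContinuousOn A M)
    (hAcomp : ∃ K : Set E, IsCompact K ∧ A '' M ⊆ K)
    (hBcontr : ∀ x ∈ M, ∀ y ∈ M, ‖B x - B y‖ ≤ κ * ‖x - y‖) :
    ∃ y ∈ M, A y + B y = y :=
  krasnoselskii_fixed_point_general hM hMclosed.isComplete hMconv hκ hAB hAcont hAcomp hBcontr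
end

section
/- Let X and Y be Banach spaces, T > 0, and let K : (0,T] → B(Y,X) be a family of bounded linear operators from Y to X that is continuous in the operator norm on (0,T], such that each K(r) is a compact operator and ‖K(r)‖_{B(Y,X)} ≤ C_K r^{α−1} for all r ∈ (0,T], for some constants α ∈ (0,1] and C_K > 0. Then the operator B defined by (Bz)(t) = ∫₀ᵗ K(t−s) z(s) ds (Bochner integral) is a well-defined bounded linear operator from C([0,T];Y) to C([0,T];X), and B is a compact operator. -/
open MeasureTheory

/-!
If `κ : S → L¹(μ; E)` is continuous and `E` acts on `Y` by compact operators `Y → X`, then for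
each `t` the functional `z ↦ ∫ κ t x (z x) ∂μ` is a compact operator on `L^∞(μ; Y)`: this is clear
when `κ t` is the indicator function of a set times a constant, as the integral then lies in a
multiple of a compact convex set, and the compact operators form a closed subspace. These
functionals depend norm-continuously on `t`, so Arzelà–Ascoli makes the operator into `C(S, X)`
compact. A convolution kernel in `L¹` fits this setting because translations act continuously
on `L¹`.
-/

open scoped ENNReal Pointwise

section ContinuousFamily

variable {𝕜 S V X : Type*} [NontriviallyNormedField 𝕜] [TopologicalSpace S]
  [NormedAddCommGroup V] [NormedSpace 𝕜 V] [NormedAddCommGroup X] [NormedSpace 𝕜 X]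

/-- The operator `v ↦ (s ↦ G s v)` into continuous functions defined by a norm-continuous family
`G` of operators. -/
def familyOperator (G : C(S, V →L[𝕜] X)) : V →L[𝕜] C(S, X) where
  toFun v := ⟨fun s => G s v, by fun_prop⟩
  map_add' v w := by ext; simp
  map_smul' c v := by ext; simp
  cont := ContinuousMap.continuous_of_continuous_uncurry _ <| by
    change Continuous fun p : V × S => G p.2 p.1
    fun_prop

@[simp]
lemma familyOperator_apply (G : C(S, V →L[𝕜] X)) (v : V) (s : S) :
    familyOperator G v s = G s v := rfl

lemma equicontinuous_familyOperator_image_closedBall (G : C(S, V →L[𝕜] X)) (r : ℝ) :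
    Equicontinuous
      fun f : familyOperator G '' Metric.closedBall 0 r => ((f : C(S, X)) : S → X) := by
  intro s₀
  refine Metric.equicontinuousAt_of_continuity_modulus (fun s => dist (G s₀) (G s) * r) ?_ _
    (.of_forall fun s => ?_)
  · have : Continuous fun s => dist (G s₀) (G s) * r := by fun_prop
    simpa using this.tendsto s₀
  · rintro ⟨_, v, hv, rfl⟩
    simpa only [dist_eq_norm, familyOperator_apply, ← sub_apply] using
      (G s₀ - G s).le_opNorm_of_le (mem_closedBall_zero_iff.1 hv)

lemma isCompactOperator_familyOperator [CompactSpace S] [CompleteSpace X]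
    {G : C(S, V →L[𝕜] X)} (hG : ∀ s, IsCompactOperator (G s)) :
    IsCompactOperator (familyOperator G) := by
  refine (isCompactOperator_iff_isCompact_closure_image_closedBall
    (familyOperator G : V →ₗ[𝕜] C(S, X)) one_pos).2 ?_
  have : T2Space (UniformOnFun S X {A | IsCompact A}) :=
    UniformOnFun.t2Space_of_covering <| Set.eq_univ_of_forall fun s =>
      Set.mem_sUnion_of_mem (Set.mem_singleton s) isCompact_singleton
  refine ArzelaAscoli.isCompact_closure_of_isClosedEmbedding (F := fun f : C(S, X) => ⇑f)
    (fun _ => id) ContinuousMap.isUniformEmbedding_toUniformOnFunIsCompact.isClosedEmbedding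
    (fun A _ => (equicontinuous_familyOperator_image_closedBall G 1).equicontinuousOn A)
    fun A _ s _ => ?_
  obtain ⟨Q, hQ, hsub⟩ :=
    (hG s).image_closedBall_subset_compact (f := (G s : V →ₗ[𝕜] X)) 1
  exact ⟨Q, hQ, Set.forall_mem_image.2 fun v hv => hsub ⟨v, hv, rfl⟩⟩

end ContinuousFamily

lemma ae_norm_le_norm_Lp_top {Ω F : Type*} [MeasurableSpace Ω] {μ : Measure Ω}
    [NormedAddCommGroup F] (z : Lp F ∞ μ) : ∀ᵐ x ∂μ, ‖z x‖ ≤ ‖z‖ := by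
  simpa only [Lp.norm_def, toReal_eLpNorm (Lp.aestronglyMeasurable z)] using
    ae_le_lpNorm_exponent_top (Lp.memLp z)

section Pairing

variable {Ω E F G : Type*} [MeasurableSpace Ω] {μ : Measure Ω}
  [NormedAddCommGroup E] [NormedSpace ℝ E] [NormedAddCommGroup F] [NormedSpace ℝ F]
  [NormedAddCommGroup G] [NormedSpace ℝ G] [CompleteSpace G]

lemma integral_mem_measureReal_smul_of_convex [IsFiniteMeasure μ] {Q : Set G} (hQ : Convex ℝ Q)
    (hQc : IsClosed Q) (hQn : Q.Nonempty) {f : Ω → G} (hf : ∀ᵐ x ∂μ, f x ∈ Q)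
    (hfi : Integrable f μ) : ∫ x, f x ∂μ ∈ μ.real Set.univ • Q := by
  rcases eq_zero_or_neZero μ with rfl | _
  · simp [Set.zero_smul_set hQn]
  · exact ⟨⨍ x, f x ∂μ, hQ.average_mem hQc hf hfi, measure_smul_average μ f⟩

lemma lpPairing_indicatorConstLp {p q : ℝ≥0∞} [Fact (1 ≤ p)] [Fact (1 ≤ q)] [p.HolderConjugate q]
    (B : E →L[ℝ] F →L[ℝ] G) {A : Set Ω} (hA : MeasurableSet A) (hμA : μ A ≠ ∞) (c : E)
    (z : Lp F q μ) :
    B.lpPairing μ p q (indicatorConstLp p hA hμA c) z = ∫ x in A, B c (z x) ∂μ := by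
  rw [ContinuousLinearMap.lpPairing_eq_integral, ← integral_indicator hA]
  refine integral_congr_ae ?_
  filter_upwards [indicatorConstLp_coeFn (p := p) (hs := hA) (hμs := hμA) (c := c)] with x hx
  by_cases h : x ∈ A <;> simp [hx, h]

lemma isCompactOperator_lpPairing_indicatorConstLp (B : E →L[ℝ] F →L[ℝ] G) {A : Set Ω}
    (hA : MeasurableSet A) (hμA : μ A ≠ ∞) {c : E} (hc : IsCompactOperator (B c)) :
    IsCompactOperator (B.lpPairing μ 1 ∞ (indicatorConstLp 1 hA hμA c)) := by
  set Q := closure (B c '' Metric.closedBall 0 1)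
  have hQ : IsCompact Q :=
    IsCompactOperator.isCompact_closure_image_closedBall (f := (B c : F →ₗ[ℝ] G)) hc 1
  have hQconv : Convex ℝ Q :=
    ((convex_closedBall (0 : F) 1).linear_image (B c : F →ₗ[ℝ] G)).closure
  have hQne : Q.Nonempty := ⟨B c 0, subset_closure ⟨0, by simp, rfl⟩⟩
  refine (isCompactOperator_iff_image_closedBall_subset_compact
    (B.lpPairing μ 1 ∞ (indicatorConstLp 1 hA hμA c) : Lp F ∞ μ →ₗ[ℝ] G) one_pos).2
    ⟨μ.real A • Q, hQ.smul _, Set.image_subset_iff.2 fun z hz => ?_⟩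
  have : Fact (μ A < ∞) := ⟨hμA.lt_top⟩
  have hz1 : ‖z‖ ≤ 1 := mem_closedBall_zero_iff.1 hz
  have hzQ : ∀ᵐ x ∂μ.restrict A, B c (z x) ∈ Q := by
    filter_upwards [ae_restrict_of_ae (ae_norm_le_norm_Lp_top z)] with x hx
    exact subset_closure ⟨z x, mem_closedBall_zero_iff.2 (hx.trans hz1), rfl⟩
  have hint : IntegrableOn (fun x => B c (z x)) A μ :=
    (B c).integrable_comp (((Lp.memLp z).restrict A).integrable le_top)
  simpa [lpPairing_indicatorConstLp] using
    integral_mem_measureReal_smul_of_convex hQconv isClosed_closure hQne hzQ hint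

lemma isCompactOperator_lpPairing {B : E →L[ℝ] F →L[ℝ] G} (hB : ∀ c, IsCompactOperator (B c))
    (f : Lp E 1 μ) : IsCompactOperator (B.lpPairing μ 1 ∞ f) := by
  induction f using Lp.induction ENNReal.one_ne_top with
  | indicatorConst c hA hμA =>
    exact isCompactOperator_lpPairing_indicatorConstLp B hA hμA.ne (hB c)
  | add hf hg _ ihf ihg => simpa using ihf.add ihg
  | isClosed =>
    exact isClosed_setOfPred_isCompactOperator.preimage (B.lpPairing μ 1 ∞).continuous

end Pairing

lemma exists_isCompactOperator_eq_integral {S Ω E X Y : Type*}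
    [TopologicalSpace S] [CompactSpace S]
    [TopologicalSpace Ω] [CompactSpace Ω] [MeasurableSpace Ω] [BorelSpace Ω]
    {μ : Measure Ω} [IsFiniteMeasure μ]
    [NormedAddCommGroup E] [NormedSpace ℝ E] [NormedAddCommGroup Y] [NormedSpace ℝ Y]
    [SecondCountableTopologyEither Ω Y]
    [NormedAddCommGroup X] [NormedSpace ℝ X] [CompleteSpace X]
    {L : E →L[ℝ] Y →L[ℝ] X} (hL : ∀ e, IsCompactOperator (L e)) (κ : C(S, Lp E 1 μ)) :
    ∃ B : C(Ω, Y) →L[ℝ] C(S, X),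
      (∀ z t, B z t = ∫ x, L (κ t x) (z x) ∂μ) ∧ IsCompactOperator B := by
  let G : C(S, C(Ω, Y) →L[ℝ] X) :=
    ⟨fun t => L.lpPairing μ 1 ∞ (κ t) ∘L ContinuousMap.toLp ∞ μ ℝ, by fun_prop⟩
  refine ⟨familyOperator G, fun z t => ?_, isCompactOperator_familyOperator fun t =>
    (isCompactOperator_lpPairing hL (κ t)).comp_clm _⟩
  change L.lpPairing μ 1 ∞ (κ t) (ContinuousMap.toLp ∞ μ ℝ z) = _
  rw [ContinuousLinearMap.lpPairing_eq_integral]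
  refine integral_congr_ae ?_
  filter_upwards [ContinuousMap.coeFn_toLp μ (p := ∞) (𝕜 := ℝ) z] with x hx
  rw [hx]

lemma exists_clm_Lp_subtype {Ω E : Type*} [MeasurableSpace Ω] {μ : Measure Ω}
    [NormedAddCommGroup E] [NormedSpace ℝ E] {p : ℝ≥0∞} [Fact (1 ≤ p)]
    {A : Set Ω} (hA : MeasurableSet A) :
    ∃ R : Lp E p μ →L[ℝ] Lp E p (μ.comap ((↑) : A → Ω)),
      ∀ f, R f =ᵐ[μ.comap (↑)] fun x => f x := by
  have hmp := measurePreserving_subtype_coe (μa := μ) hA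
  refine ⟨(Lp.compMeasurePreservingₗᵢ ℝ _ hmp).toContinuousLinearMap ∘L
    LpToLpRestrictCLM Ω E ℝ μ p A, fun f => ?_⟩
  exact (Lp.coeFn_compMeasurePreserving _ hmp).trans
    (hmp.quasiMeasurePreserving.ae_eq_comp (LpToLpRestrictCLM_coeFn ℝ A f))

section Group

variable {G E : Type*} [AddGroup G] [TopologicalSpace G] [IsTopologicalAddGroup G]
  [MeasurableSpace G] [BorelSpace G] {μ : Measure G}
  [μ.IsAddLeftInvariant] [μ.IsNegInvariant] [μ.InnerRegularCompactLTTop]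
  [IsLocallyFiniteMeasure μ] [NormedAddCommGroup E] {k : G → E}

lemma exists_continuousMap_Lp_comp_sub {p : ℝ≥0∞} [Fact (1 ≤ p)] (hp : p ≠ ∞)
    (hk : MemLp k p μ) :
    ∃ κ : C(G, Lp E p μ), ∀ t, κ t =ᵐ[μ] fun s => k (t - s) := by
  let reflect : G → C(G, G) := fun t => ⟨fun s => t - s, by fun_prop⟩
  have hreflect : Continuous reflect :=
    ContinuousMap.continuous_of_continuous_uncurry _ (continuous_fst.sub continuous_snd)
  have hmp (t : G) : MeasurePreserving (reflect t) μ μ := μ.measurePreserving_sub_left t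
  exact ⟨⟨fun t => Lp.compMeasurePreserving (reflect t) (hmp t) (hk.toLp k),
    continuous_const.compMeasurePreservingLp hreflect hmp hp⟩,
    fun t => (hk.comp_measurePreserving (hmp t)).coeFn_toLp⟩

lemma exists_isCompactOperator_eq_integral_comp_sub [T2Space G] [SecondCountableTopology G]
    {X Y : Type*} [NormedSpace ℝ E] [NormedAddCommGroup Y] [NormedSpace ℝ Y]
    [NormedAddCommGroup X] [NormedSpace ℝ X] [CompleteSpace X]
    {A S : Set G} [CompactSpace A] [CompactSpace S]
    {L : E →L[ℝ] Y →L[ℝ] X} (hL : ∀ e, IsCompactOperator (L e)) (hk : Integrable k μ) :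
    ∃ B : C(A, Y) →L[ℝ] C(S, X),
      (∀ z (t : S), B z t = ∫ s : A, L (k (t - s)) (z s) ∂μ.comap (↑)) ∧
      IsCompactOperator B := by
  have hA : IsCompact A := isCompact_iff_compactSpace.2 ‹_›
  have : IsFiniteMeasure (μ.comap ((↑) : A → G)) :=
    ⟨by simpa [comap_subtype_coe_apply hA.measurableSet] using hA.measure_lt_top⟩
  obtain ⟨κ, hκ⟩ :=
    exists_continuousMap_Lp_comp_sub ENNReal.one_ne_top (memLp_one_iff_integrable.2 hk)
  obtain ⟨R, hR⟩ := exists_clm_Lp_subtype (E := E) (μ := μ) (p := 1) hA.measurableSet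
  obtain ⟨B, hB, hBc⟩ := exists_isCompactOperator_eq_integral (Y := Y) hL
    (⟨fun t : S => R (κ t), by fun_prop⟩ : C(S, Lp E 1 (μ.comap ((↑) : A → G))))
  refine ⟨B, fun z t => (hB z t).trans (integral_congr_ae ?_), hBc⟩
  have hval := (measurePreserving_subtype_coe (μa := μ) hA.measurableSet).quasiMeasurePreserving
  filter_upwards [hR (κ t), hval.ae (ae_restrict_of_ae (hκ t))] with s hRs hκs
  simp only [ContinuousMap.coe_mk, hRs, hκs]

end Group

lemma exists_integrable_submodule_lift {Ω R V : Type*} [MeasurableSpace Ω] {μ : Measure Ω}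
    [Ring R] [NormedAddCommGroup V] [Module R V] {p : Submodule R V} {f : Ω → V}
    (hf : Integrable f μ) (hfp : ∀ᵐ x ∂μ, f x ∈ p) :
    ∃ g : Ω → p, Integrable g μ ∧ (fun x => (g x : V)) =ᵐ[μ] f := by
  classical
  let g : Ω → p := fun x => if h : f x ∈ p then ⟨f x, h⟩ else 0
  have hgf : (fun x => (g x : V)) =ᵐ[μ] f := by
    filter_upwards [hfp] with x hx
    simp [g, hx]
  have hg : Integrable (fun x => (g x : V)) μ := hf.congr hgf.symm
  have hgm : AEStronglyMeasurable g μ :=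
    Topology.IsEmbedding.subtypeVal.aestronglyMeasurable_comp_iff.1 hg.aestronglyMeasurable
  exact ⟨g, hg.mono hgm (.of_forall fun _ => le_rfl), hgf⟩

lemma integrableOn_Ioc_of_norm_le_rpow {E : Type*} [NormedAddCommGroup E] {f : ℝ → E}
    {T p C : ℝ} (hf : AEStronglyMeasurable f (volume.restrict (Set.Ioc 0 T))) (hp : -1 < p)
    (hbound : ∀ r ∈ Set.Ioc 0 T, ‖f r‖ ≤ C * r ^ p) : IntegrableOn f (Set.Ioc 0 T) :=
  ((intervalIntegral.intervalIntegrable_rpow' hp).const_mul C).1.mono' hf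
    (ae_restrict_of_forall_mem measurableSet_Ioc hbound)

section Convolution

variable {X Y : Type*} [NormedAddCommGroup X] [NormedSpace ℝ X]
  [NormedAddCommGroup Y] [NormedSpace ℝ Y]

lemma setIntegral_Icc_indicator_comp_sub {T t : ℝ} (ht : t ∈ Set.Icc 0 T)
    (K : ℝ → Y →L[ℝ] X) (y : ℝ → Y) :
    ∫ s in Set.Icc 0 T, (Set.Ioc 0 T).indicator K (t - s) (y s) =
      ∫ s in (0 : ℝ)..t, K (t - s) (y s) := by
  have hind (s : ℝ) : (Set.Ioc 0 T).indicator K (t - s) (y s) =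
      (Set.Ico (t - T) t).indicator (fun s => K (t - s) (y s)) s := by
    have hmem : t - s ∈ Set.Ioc 0 T ↔ s ∈ Set.Ico (t - T) t := by
      simp only [Set.mem_Ioc, Set.mem_Ico]
      constructor <;> intro h <;> constructor <;> linarith [h.1, h.2]
    by_cases hs : s ∈ Set.Ico (t - T) t <;> simp [Set.indicator, hmem, hs]
  have hinter : Set.Icc 0 T ∩ Set.Ico (t - T) t = Set.Ico 0 t := by
    ext s
    simp only [Set.mem_inter_iff, Set.mem_Icc, Set.mem_Ico]
    constructor
    · rintro ⟨⟨h0, -⟩, -, hst⟩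
      exact ⟨h0, hst⟩
    · rintro ⟨h0, hst⟩
      exact ⟨⟨h0, by linarith [ht.2]⟩, by linarith [ht.2], hst⟩
  simp_rw [hind]
  rw [setIntegral_indicator measurableSet_Ico, hinter, integral_Ico_eq_integral_Ioc,
    intervalIntegral.integral_of_le ht.1]

lemma setIntegral_Icc_comp_sub_of_ae_eq_indicator {T t : ℝ} (ht : t ∈ Set.Icc 0 T)
    {k K : ℝ → Y →L[ℝ] X} (hk : k =ᵐ[volume] (Set.Ioc 0 T).indicator K) (y : ℝ → Y) :
    ∫ s in Set.Icc 0 T, k (t - s) (y s) = ∫ s in (0 : ℝ)..t, K (t - s) (y s) := by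
  rw [← setIntegral_Icc_indicator_comp_sub ht]
  refine integral_congr_ae (ae_restrict_of_ae ?_)
  filter_upwards [(volume.measurePreserving_sub_left t).quasiMeasurePreserving.ae hk] with s hs
  rw [hs]

theorem kernel_convolution_operator_compact_general [CompleteSpace X] (T : ℝ) (hT : 0 ≤ T)
    (K : ℝ → Y →L[ℝ] X) (hK : IntegrableOn K (Set.Ioc 0 T))
    (hKc : ∀ᵐ r ∂volume.restrict (Set.Ioc 0 T), IsCompactOperator (K r)) :
    ∃ B : C(Set.Icc (0:ℝ) T, Y) →L[ℝ] C(Set.Icc (0:ℝ) T, X),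
      (∀ z : C(Set.Icc (0:ℝ) T, Y), ∀ t : Set.Icc (0:ℝ) T,
        B z t = ∫ s in (0:ℝ)..(t : ℝ), K ((t : ℝ) - s) (z (Set.projIcc 0 T hT s))) ∧
      IsCompactOperator B := by
  let E := compactOperator (RingHom.id ℝ) Y X
  have hKE : ∀ᵐ r, (Set.Ioc 0 T).indicator K r ∈ E := by
    filter_upwards [(ae_restrict_iff' measurableSet_Ioc).1 hKc] with r hr
    by_cases h : r ∈ Set.Ioc 0 T
    · simpa [h] using! hr h
    · simp [h]
  obtain ⟨k, hk, hkK⟩ :=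
    exists_integrable_submodule_lift ((integrable_indicator_iff measurableSet_Ioc).2 hK) hKE
  obtain ⟨B, hB, hBc⟩ := exists_isCompactOperator_eq_integral_comp_sub
    (A := Set.Icc 0 T) (S := Set.Icc 0 T) (L := E.subtypeL) (fun e => e.2) hk
  refine ⟨B, fun z t => ?_, hBc⟩
  let y : ℝ → Y := fun s => z (Set.projIcc 0 T hT s)
  calc B z t = ∫ s : Set.Icc 0 T, (k (t - s) : Y →L[ℝ] X) (y s) ∂volume.comap Subtype.val := by
        simp only [hB, y, Set.projIcc_val, E.subtypeL_apply]
    _ = ∫ s in Set.Icc 0 T, (k (t - s) : Y →L[ℝ] X) (y s) :=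
        integral_subtype_comap measurableSet_Icc fun s => (k (t - s) : Y →L[ℝ] X) (y s)
    _ = ∫ s in (0 : ℝ)..t, K (t - s) (y s) := setIntegral_Icc_comp_sub_of_ae_eq_indicator t.2 hkK y

end Convolution

/-- **Proposition 2 (general kernel form).** If `K : (0,T] → B(Y,X)` is operator-norm
continuous, each `K(r)` is compact, and `‖K(r)‖ ≤ C_K r^(α−1)` with `α ∈ (0,1]`, then
`(Bz)(t) = ∫₀ᵗ K(t−s) z(s) ds` is a well-defined bounded linear operator from
`C([0,T];Y)` to `C([0,T];X)`, and it is a compact operator. -/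
theorem kernel_convolution_operator_compact
    {X Y : Type*} [NormedAddCommGroup X] [NormedSpace ℝ X] [CompleteSpace X]
    [NormedAddCommGroup Y] [NormedSpace ℝ Y]
    (T : ℝ) (hT : 0 < T)
    (α CK : ℝ) (hα : α ∈ Set.Ioc (0:ℝ) 1) (hCK : 0 < CK)
    (K : ℝ → Y →L[ℝ] X)
    (hKcont : ContinuousOn K (Set.Ioc 0 T))
    (hKcompact : ∀ r ∈ Set.Ioc (0:ℝ) T, IsCompactOperator (K r))
    (hKbound : ∀ r ∈ Set.Ioc (0:ℝ) T, ‖K r‖ ≤ CK * r ^ (α - 1)) :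
    ∃ B : C(Set.Icc (0:ℝ) T, Y) →L[ℝ] C(Set.Icc (0:ℝ) T, X),
      (∀ z : C(Set.Icc (0:ℝ) T, Y), ∀ t : Set.Icc (0:ℝ) T,
        B z t = ∫ s in (0:ℝ)..(t : ℝ), K ((t : ℝ) - s) (z (Set.projIcc 0 T hT.le s))) ∧
      IsCompactOperator B :=
  kernel_convolution_operator_compact_general T hT.le K
    (integrableOn_Ioc_of_norm_le_rpow (hKcont.aestronglyMeasurable measurableSet_Ioc)
      (by linarith [hα.1]) hKbound)
    (ae_restrict_of_forall_mem measurableSet_Ioc hKcompact)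
end
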